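/- Under Assumption (C), let u = (u¹,…,u^d) be a probabilistic solution (for some initial data) such that t ↦ u(t,·) is continuous in L¹_loc(ℝ)^d. Then for every γ ∈ {1,…,d} and Lebesgue-almost every v ∈ (0,1), the quantile trajectory t ↦ X_v^γ(t) satisfies, for all 0 ≤ t₁ ≤ t₂, X_v^γ(t₁) + λ̲^γ (t₂ − t₁) ≤ X_v^γ(t₂) ≤ X_v^γ(t₁) + λ̄^γ (t₂ − t₁); in particular t ↦ X_v^γ(t) is Lipschitz continuous with almost-everywhere derivative lying in [λ̲^γ, λ̄^γ]. -/

import Mathlib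

open MeasureTheory Filter Set

noncomputable section

/-- A cumulative distribution function on ℝ: nondecreasing, right-continuous,
tending to `0` at `-∞` and to `1` at `+∞`. -/
def IsCDF (F : ℝ → ℝ) : Prop :=
  Monotone F ∧ (∀ x : ℝ, ContinuousWithinAt F (Ici x) x) ∧
    Tendsto F atBot (nhds 0) ∧ Tendsto F atTop (nhds 1)

/-- The pseudo-inverse `F⁻¹(v) = inf {x | v ≤ F x}` of a CDF. -/
def cdfInv (F : ℝ → ℝ) (v : ℝ) : ℝ := sInf {x : ℝ | v ≤ F x}

/-- The velocity function `λ^γ{u}(t,x)` obtained by averaging the `γ`-th coordinate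
between the left limit `u^γ(t,x⁻)` and the value `u^γ(t,x)`. -/
def lamBrace {d : ℕ} (lam : Fin d → (Fin d → ℝ) → ℝ)
    (u : Fin d → ℝ → ℝ → ℝ) (γ : Fin d) (t x : ℝ) : ℝ :=
  ∫ θ in (0:ℝ)..1,
    lam γ (Function.update (fun γ' => u γ' t x) γ
      ((1 - θ) * Function.leftLim (u γ t) x + θ * u γ t x))

/-- A test function `φ` of class `C^{1,0}_c`: continuous, compactly supported,
with continuous time derivative `φt`. -/
def IsTestFun (φ φt : ℝ → ℝ → ℝ) : Prop :=
  Continuous (fun p : ℝ × ℝ => φ p.1 p.2) ∧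
    HasCompactSupport (fun p : ℝ × ℝ => φ p.1 p.2) ∧
    Continuous (fun p : ℝ × ℝ => φt p.1 p.2) ∧
    ∀ t x : ℝ, HasDerivAt (fun s => φ s x) (φt t x) t

/-- A probabilistic solution to the diagonal hyperbolic system
`∂_t u^γ + λ^γ(u) ∂_x u^γ = 0` with initial data `u0`. -/
def IsProbSol {d : ℕ} (lam : Fin d → (Fin d → ℝ) → ℝ)
    (u : Fin d → ℝ → ℝ → ℝ) (u0 : Fin d → ℝ → ℝ) : Prop :=
  (∀ γ : Fin d, Measurable fun p : Ici (0:ℝ) × ℝ => u γ (p.1 : ℝ) p.2) ∧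
  (∀ (γ : Fin d) (t : ℝ), 0 ≤ t → IsCDF (u γ t)) ∧
  (∀ γ : Fin d, IsCDF (u0 γ)) ∧
  ∃ μ : Fin d → ℝ → Measure ℝ,
    (∀ (γ : Fin d) (t : ℝ), IsProbabilityMeasure (μ γ t)) ∧
    (∀ (γ : Fin d) (t : ℝ), 0 ≤ t → ∀ x : ℝ, (μ γ t (Iic x)).toReal = u γ t x) ∧
    ∀ φ φt : Fin d → ℝ → ℝ → ℝ, (∀ γ, IsTestFun (φ γ) (φt γ)) →
      (∑ γ : Fin d, ((∫ t in Ici (0:ℝ), ∫ x : ℝ, φt γ t x * u γ t x) +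
          ∫ x : ℝ, φ γ 0 x * u0 γ x))
        = ∑ γ : Fin d,
            ∫ t in Ici (0:ℝ), ∫ x : ℝ, φ γ t x * lamBrace lam u γ t x ∂(μ γ t)

/-- Continuity of `t ↦ u(t,·)` in `L¹_loc(ℝ)^d` on `[0,∞)`. -/
def ContL1loc {d : ℕ} (u : Fin d → ℝ → ℝ → ℝ) : Prop :=
  ∀ (γ : Fin d) (a b t₀ : ℝ), 0 ≤ t₀ →
    Tendsto (fun t => ∫ x in Icc a b, |u γ t x - u γ t₀ x|)
      (nhdsWithin t₀ (Ici 0)) (nhds 0)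

/-! Fix `γ` and a speed `c`. Testing the equation against `χ(t) ψ(x - ct)` shows that the average
`∫ ψ(x - ct) u^γ(t, x) dx` has distributional time derivative
`-∫ ψ(x - ct) (λ^γ{u}(t, x) - c) μ^γ_t(dx)`. Its sign is known when `ψ ≥ 0` and `c` bounds the
velocity from one side, so these averages, continuous in time by `L¹_loc` continuity, are monotone
in time. Letting `ψ` shrink to a point, `t ↦ u^γ(t, x + ct)` is monotone for every `x`; inverting
this in `x` bounds the quantiles.
-/

open ProbabilityTheory
open scoped Topology Convolution

/-! ### Monotonicity from integration against test functions -/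

lemma monotoneOn_convolution_bump {g : ℝ → ℝ} {a : ℝ} (hg : Continuous g)
    (h : ∀ χ : ℝ → ℝ, ContDiff ℝ 1 χ → HasCompactSupport χ → tsupport χ ⊆ Ioi a → 0 ≤ χ →
      ∫ t, deriv χ t * g t ≤ 0) (ρ : ContDiffBump (0 : ℝ)) :
    MonotoneOn (ρ.normed volume ⋆[ContinuousLinearMap.lsmul ℝ ℝ] g) (Ioi (a + ρ.rOut)) := by
  set r := ρ.normed volume
  have hr : ContDiff ℝ 1 r := ρ.contDiff_normed (n := 1)
  have hasDeriv (t : ℝ) := ρ.hasCompactSupport_normed.hasDerivAt_convolution_left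
    (ContinuousLinearMap.lsmul ℝ ℝ) hr hg.locallyIntegrable (μ := volume) t
  refine monotoneOn_of_deriv_nonneg (convex_Ioi _)
    (fun t _ => (hasDeriv t).continuousAt.continuousWithinAt)
    (fun t _ => (hasDeriv t).differentiableAt.differentiableWithinAt) fun t ht => ?_
  rw [interior_Ioi, mem_Ioi] at ht
  have supp : tsupport (fun s => r (t - s)) ⊆ Ioi a := by
    change tsupport (r ∘ Homeomorph.subLeft t) ⊆ _
    rw [tsupport_comp_eq_preimage, ρ.tsupport_normed_eq]
    intro s hs
    rw [mem_preimage, mem_closedBall_zero_iff, Real.norm_eq_abs] at hs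
    have : t - s ≤ ρ.rOut := (le_abs_self _).trans hs
    rw [mem_Ioi]
    linarith
  have test := h (fun s => r (t - s)) (by fun_prop)
    (ρ.hasCompactSupport_normed.comp_homeomorph (Homeomorph.subLeft t)) supp
    fun s => ρ.nonneg_normed _
  rw [(hasDeriv t).deriv, convolution_lsmul_swap]
  simpa only [deriv_comp_const_sub, neg_mul, integral_neg, neg_nonpos, smul_eq_mul] using test

lemma monotoneOn_Ici_of_integral_deriv_mul_nonpos {g : ℝ → ℝ} {a : ℝ} (hg : Continuous g)
    (h : ∀ χ : ℝ → ℝ, ContDiff ℝ 1 χ → HasCompactSupport χ → tsupport χ ⊆ Ioi a → 0 ≤ χ →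
      ∫ t, deriv χ t * g t ≤ 0) : MonotoneOn g (Ici a) := by
  rw [← Ioi_insert]
  refine MonotoneOn.insert_of_continuousWithinAt (fun t₁ ht₁ t₂ _ h₁₂ => ?_) ?_
    hg.continuousWithinAt
  · let ρ (n : ℕ) : ContDiffBump (0 : ℝ) :=
      ⟨1 / (n + 1) / 2, 1 / (n + 1), by positivity, half_lt_self (by positivity)⟩
    have hρ : Tendsto (fun n => (ρ n).rOut) atTop (𝓝 0) := tendsto_one_div_add_atTop_nhds_zero_nat
    have lim := ContDiffBump.convolution_tendsto_right_of_continuous (μ := volume) hρ hg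
    refine le_of_tendsto_of_tendsto (lim t₁) (lim t₂) ?_
    filter_upwards [hρ.eventually_lt_const (sub_pos.2 ht₁)] with n hn
    exact monotoneOn_convolution_bump hg h (ρ n) (mem_Ioi.2 (by linarith))
      (mem_Ioi.2 (by linarith)) h₁₂
  · rw [← mem_closure_iff_clusterPt]
    simp

lemma antitoneOn_Ici_of_integral_deriv_mul_nonneg {g : ℝ → ℝ} {a : ℝ} (hg : Continuous g)
    (h : ∀ χ : ℝ → ℝ, ContDiff ℝ 1 χ → HasCompactSupport χ → tsupport χ ⊆ Ioi a → 0 ≤ χ →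
      0 ≤ ∫ t, deriv χ t * g t) : AntitoneOn g (Ici a) := by
  have monotone_neg : MonotoneOn (-g) (Ici a) :=
    monotoneOn_Ici_of_integral_deriv_mul_nonpos hg.neg fun χ hχ hs ha h0 => by
      simpa [integral_neg] using h χ hχ hs ha h0
  exact fun t₁ ht₁ t₂ ht₂ h₁₂ => neg_le_neg_iff.1 (monotone_neg ht₁ ht₂ h₁₂)

lemma le_of_forall_integral_mul_le_of_lt {F G : ℝ → ℝ} (hF : Monotone F) (hG : Monotone G)
    (h : ∀ ψ : ℝ → ℝ, ContDiff ℝ 1 ψ → HasCompactSupport ψ → 0 ≤ ψ →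
      ∫ x, ψ x * F x ≤ ∫ x, ψ x * G x) {y z : ℝ} (hyz : y < z) : F y ≤ G z := by
  let f : ContDiffBump ((y + z) / 2) :=
    ⟨(z - y) / 4, (z - y) / 2, by linarith, by linarith⟩
  have hball : Metric.ball ((y + z) / 2) ((z - y) / 2) = Ioo y z := by
    rw [Real.ball_eq_Ioo]; congr 1 <;> ring
  have hsupp {x : ℝ} (hx : f.normed volume x ≠ 0) : x ∈ Ioo y z := by
    rw [← hball, ← f.support_normed_eq (μ := volume)]; exact hx
  have hf : Continuous (f.normed volume) := f.continuous_normed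
  have hfs : HasCompactSupport (f.normed volume) := f.hasCompactSupport_normed
  have int_F := hF.locallyIntegrable.integrable_smul_left_of_hasCompactSupport
    (μ := volume) hf hfs
  have int_G := hG.locallyIntegrable.integrable_smul_left_of_hasCompactSupport
    (μ := volume) hf hfs
  have average (c : ℝ) : ∫ x, f.normed volume x * c = c := by
    rw [integral_mul_const, f.integral_normed, one_mul]
  have int_const (c : ℝ) : Integrable fun x => f.normed volume x * c :=
    f.integrable_normed.mul_const c
  calc F y = ∫ x, f.normed volume x * F y := (average _).symm
    _ ≤ ∫ x, f.normed volume x * F x := by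
      refine integral_mono (int_const _) int_F fun x => ?_
      by_cases hx : f.normed volume x = 0
      · simp [hx]
      · exact mul_le_mul_of_nonneg_left (hF (hsupp hx).1.le) (f.nonneg_normed x)
    _ ≤ ∫ x, f.normed volume x * G x :=
      h _ (f.contDiff_normed (n := 1)) hfs f.nonneg_normed
    _ ≤ ∫ x, f.normed volume x * G z := by
      refine integral_mono int_G (int_const _) fun x => ?_
      by_cases hx : f.normed volume x = 0
      · simp [hx]
      · exact mul_le_mul_of_nonneg_left (hG (hsupp hx).2.le) (f.nonneg_normed x)
    _ = G z := average _

lemma le_of_forall_integral_mul_le {F G : ℝ → ℝ} (hF : Monotone F) (hG : Monotone G)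
    (h : ∀ ψ : ℝ → ℝ, ContDiff ℝ 1 ψ → HasCompactSupport ψ → 0 ≤ ψ →
      ∫ x, ψ x * F x ≤ ∫ x, ψ x * G x) {y : ℝ} (hGy : ContinuousWithinAt G (Ici y) y) :
    F y ≤ G y :=
  ge_of_tendsto (hGy.mono Ioi_subset_Ici_self)
    (eventually_mem_nhdsWithin.mono fun _ => le_of_forall_integral_mul_le_of_lt hF hG h)

lemma integral_deriv_mul_cdf (μ : Measure ℝ) [IsProbabilityMeasure μ] {ψ : ℝ → ℝ}
    (hψ : ContDiff ℝ 1 ψ) (hs : HasCompactSupport ψ) :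
    ∫ x, deriv ψ x * cdf μ x = -∫ x, ψ x ∂μ := by
  have hint : Integrable (deriv ψ) :=
    (hψ.continuous_deriv le_rfl).integrable_of_hasCompactSupport hs.deriv
  have cdf_as_integral (x : ℝ) :
      deriv ψ x * cdf μ x = ∫ y, (Iic x).indicator (fun _ => deriv ψ x) y ∂μ := by
    rw [integral_indicator_const _ measurableSet_Iic, cdf_eq_real, smul_eq_mul, mul_comm]
  have tail_integral (y : ℝ) : ∫ x, (Iic x).indicator (fun _ => deriv ψ x) y = -ψ y := by
    calc ∫ x, (Iic x).indicator (fun _ => deriv ψ x) y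
        = ∫ x, (Ici y).indicator (deriv ψ) x := by simp [indicator]
      _ = -ψ y := by
        rw [integral_indicator measurableSet_Ici, integral_Ici_eq_integral_Ioi,
          hs.integral_Ioi_deriv_eq hψ]
  have int_prod : Integrable
      (Function.uncurry fun x y => (Iic x).indicator (fun _ => deriv ψ x) y)
      (volume.prod μ) := by
    refine ((hint.comp_fst μ).indicator (measurableSet_le measurable_snd measurable_fst)).congr
      (Eventually.of_forall fun p => ?_)
    simp [indicator, Function.uncurry]
  simp_rw [cdf_as_integral]
  rw [integral_integral_swap int_prod]
  simp_rw [tail_integral, integral_neg]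

/-! ### Averages in a moving frame -/

/-- The average of `F(t, ·)` against the weight `ψ` carried along at speed `c`. -/
def movingAverage (ψ : ℝ → ℝ) (c : ℝ) (F : ℝ → ℝ → ℝ) (t : ℝ) : ℝ :=
  ∫ x, ψ (x - c * t) * F t x

/-- Continuity of `t ↦ F(t, ·)` from `ℝ` to `L¹_loc(ℝ)`. -/
def ContinuousL1loc (F : ℝ → ℝ → ℝ) : Prop :=
  ∀ a b t₀ : ℝ, Tendsto (fun t => ∫ x in Icc a b, |F t x - F t₀ x|) (𝓝 t₀) (𝓝 0)

lemma movingAverage_eq (ψ : ℝ → ℝ) (c : ℝ) (F : ℝ → ℝ → ℝ) (t : ℝ) :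
    movingAverage ψ c F t = ∫ x, ψ x * F t (x + c * t) := by
  simpa only [movingAverage, sub_add_cancel] using
    integral_sub_right_eq_self (μ := volume) (fun x => ψ x * F t (x + c * t)) (c * t)

lemma continuous_movingAverage_const {ψ F : ℝ → ℝ} (hψ : Continuous ψ) (hs : HasCompactSupport ψ)
    (c : ℝ) (hF : LocallyIntegrable F) : Continuous (movingAverage ψ c fun _ => F) := by
  have conv : Continuous (F ⋆[ContinuousLinearMap.lsmul ℝ ℝ] fun x => ψ (-x)) :=
    (hs.comp_homeomorph (Homeomorph.neg ℝ)).continuous_convolution_right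
      (ContinuousLinearMap.lsmul ℝ ℝ) hF (by fun_prop)
  refine (conv.comp (continuous_const_mul c)).congr fun t => integral_congr_ae <|
    Eventually.of_forall fun x => ?_
  simp [mul_comm]

lemma abs_integral_mul_le {f w : ℝ → ℝ} {a b M : ℝ} (hw : LocallyIntegrable w)
    (hM : ∀ x, |f x| ≤ M) (hf : ∀ x ∉ Icc a b, f x = 0) :
    |∫ x, f x * w x| ≤ M * ∫ x in Icc a b, |w x| := by
  have restrict : ∫ x in Icc a b, f x * w x = ∫ x, f x * w x :=
    setIntegral_eq_integral_of_forall_compl_eq_zero fun x hx => by rw [hf x hx, zero_mul]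
  rw [← restrict, ← integral_const_mul, ← Real.norm_eq_abs]
  refine norm_integral_le_of_norm_le (((hw.integrableOn_isCompact isCompact_Icc).abs).const_mul M)
    (Eventually.of_forall fun x => ?_)
  rw [norm_mul]
  exact mul_le_mul_of_nonneg_right (hM x) (norm_nonneg _)

lemma tendsto_movingAverage_sub {ψ : ℝ → ℝ} (hψ : Continuous ψ) (hs : HasCompactSupport ψ)
    (c : ℝ) {F : ℝ → ℝ → ℝ} (hF : ∀ t, LocallyIntegrable (F t)) (hcont : ContinuousL1loc F)
    (t₀ : ℝ) :
    Tendsto (movingAverage ψ c fun t x => F t x - F t₀ x) (𝓝 t₀) (𝓝 0) := by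
  obtain ⟨M, hM⟩ := hψ.bounded_above_of_compact_support hs
  obtain ⟨r, hr⟩ := hs.isCompact.isBounded.subset_closedBall 0
  have zero_of_lt {y : ℝ} (hy : r < |y|) : ψ y = 0 := by
    refine image_eq_zero_of_notMem_tsupport fun hmem => ?_
    have := mem_closedBall_zero_iff.1 (hr hmem)
    exact absurd hy (not_lt.2 this)
  have frame_near : ∀ᶠ t in 𝓝 t₀, |c * t - c * t₀| < 1 :=
    ((continuous_const_mul c).tendsto t₀).eventually (Metric.ball_mem_nhds _ one_pos)
  refine squeeze_zero_norm' (a := fun t => M *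
    ∫ x in Icc (c * t₀ - (r + 1)) (c * t₀ + (r + 1)), |F t x - F t₀ x|) ?_ ?_
  · filter_upwards [frame_near] with t ht
    refine abs_integral_mul_le ((hF t).sub (hF t₀)) (fun x => hM _) fun x hx => zero_of_lt ?_
    by_contra! hle
    rw [abs_le] at hle
    rw [abs_lt] at ht
    exact hx ⟨by linarith, by linarith⟩
  · simpa using (hcont _ _ t₀).const_mul M

lemma continuous_movingAverage {ψ : ℝ → ℝ} (hψ : Continuous ψ) (hs : HasCompactSupport ψ)
    (c : ℝ) {F : ℝ → ℝ → ℝ} (hF : ∀ t, LocallyIntegrable (F t)) (hcont : ContinuousL1loc F) :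
    Continuous (movingAverage ψ c F) := by
  have hint (t s : ℝ) : Integrable fun x => ψ (x - c * t) * F s x :=
    (hF s).integrable_smul_left_of_hasCompactSupport (by fun_prop)
      (hs.comp_homeomorph (Homeomorph.subRight (c * t)))
  refine continuous_iff_continuousAt.2 fun t₀ => ?_
  have split : movingAverage ψ c F = fun t =>
      movingAverage ψ c (fun t x => F t x - F t₀ x) t + movingAverage ψ c (fun _ => F t₀) t := by
    ext t
    simp only [movingAverage, mul_sub, integral_sub (hint t t) (hint t t₀), sub_add_cancel]
  rw [ContinuousAt, split]
  simpa [movingAverage] using (tendsto_movingAverage_sub hψ hs c hF hcont t₀).add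
    ((continuous_movingAverage_const hψ hs c (hF t₀)).tendsto t₀)

/-! ### Scalar transport equations -/

/-- The distribution functions `F(t, ·)` of the measures `κ t` form an `L¹_loc`-continuous weak
solution of `∂ₜF + L ∂ₓF = 0` on `(0, ∞) × ℝ` with bounded velocity `L`; here `L ∂ₓF` stands for
the measure `L(t, ·) κ t`. Initial values are not recorded: test functions vanish at time `0`. -/
structure IsWeakTransport (κ : Kernel ℝ ℝ) (L : ℝ → ℝ → ℝ) : Prop where
  continuousL1loc : ContinuousL1loc fun t => cdf (κ t)
  measurable_velocity : Measurable (Function.uncurry L)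
  bounded_velocity : ∃ C, ∀ t x, |L t x| ≤ C
  weak_eq : ∀ φ φt : ℝ → ℝ → ℝ, IsTestFun φ φt → (∀ x, φ 0 x = 0) →
    ∫ t in Ici (0 : ℝ), ∫ x, φt t x * cdf (κ t) x
      = ∫ t in Ici (0 : ℝ), ∫ x, φ t x * L t x ∂κ t

lemma isTestFun_mul_comp_sub {χ ψ : ℝ → ℝ} (hχ : ContDiff ℝ 1 χ) (hχs : HasCompactSupport χ)
    (hψ : ContDiff ℝ 1 ψ) (hψs : HasCompactSupport ψ) (c : ℝ) :
    IsTestFun (fun t x => χ t * ψ (x - c * t))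
      (fun t x => deriv χ t * ψ (x - c * t) - c * χ t * deriv ψ (x - c * t)) := by
  have : Continuous (deriv χ) := hχ.continuous_deriv le_rfl
  have : Continuous (deriv ψ) := hψ.continuous_deriv le_rfl
  refine ⟨by fun_prop, ?_, by fun_prop, fun t x => ?_⟩
  · let shear : ℝ × ℝ → ℝ × ℝ := fun p => (p.1, p.2 + c * p.1)
    refine HasCompactSupport.intro
      ((hχs.isCompact.prod hψs.isCompact).image (f := shear) (by fun_prop)) fun p hp => ?_
    by_contra hne
    refine hp ⟨(p.1, p.2 - c * p.1), ⟨subset_tsupport _ (left_ne_zero_of_mul hne),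
      subset_tsupport _ (right_ne_zero_of_mul hne)⟩, by simp [shear]⟩
  · have inner : HasDerivAt (fun s => x - c * s) (-c) t := by
      simpa using ((hasDerivAt_id t).const_mul c).const_sub x
    have hχt := (hχ.differentiable one_ne_zero t).hasDerivAt
    have hψt := (hψ.differentiable one_ne_zero (x - c * t)).hasDerivAt
    exact (hχt.mul (hψt.comp t inner)).congr_deriv (by simp only [Function.comp_apply]; ring)

lemma integrable_mul_integral_kernel {α β : Type*} [MeasurableSpace α] [MeasurableSpace β]
    {ν : Measure α} (κ : Kernel α β) [IsMarkovKernel κ] {χ : α → ℝ} (hχ : Integrable χ ν)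
    {f : α → β → ℝ} (hf : Measurable (Function.uncurry f)) {C : ℝ} (hC : ∀ a b, |f a b| ≤ C) :
    Integrable (fun a => χ a * ∫ b, f a b ∂κ a) ν := by
  refine hχ.mul_bdd (c := C)
    hf.stronglyMeasurable.integral_kernel_prod_right.aestronglyMeasurable
    (Eventually.of_forall fun a => ?_)
  simpa using norm_integral_le_of_norm_le_const (μ := κ a) (f := f a)
    (Eventually.of_forall fun b => (Real.norm_eq_abs _).trans_le (hC a b))

lemma integral_testFun_mul_cdf (μ : Measure ℝ) [IsProbabilityMeasure μ] {ψ : ℝ → ℝ}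
    (hψ : ContDiff ℝ 1 ψ) (hψs : HasCompactSupport ψ) (p q s : ℝ) :
    ∫ x, (p * ψ (x - s) - q * deriv ψ (x - s)) * cdf μ x
      = p * (∫ x, ψ (x - s) * cdf μ x) + q * ∫ x, ψ (x - s) ∂μ := by
  have hψs' : HasCompactSupport fun x => ψ (x - s) :=
    hψs.comp_homeomorph (Homeomorph.subRight s)
  have hψ' : ContDiff ℝ 1 fun x => ψ (x - s) := by fun_prop
  have int_mul_cdf {f : ℝ → ℝ} (hf : Continuous f) (hfs : HasCompactSupport f) :
      Integrable fun x => f x * cdf μ x :=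
    (monotone_cdf μ).locallyIntegrable.integrable_smul_left_of_hasCompactSupport hf hfs
  have by_parts := integral_deriv_mul_cdf μ hψ' hψs'
  have int_deriv := int_mul_cdf (hψ'.continuous_deriv le_rfl) hψs'.deriv
  simp only [deriv_comp_sub_const] at by_parts int_deriv
  simp only [sub_mul, mul_assoc]
  rw [integral_sub ((int_mul_cdf hψ'.continuous hψs').const_mul p) (int_deriv.const_mul q),
    integral_const_mul, integral_const_mul, by_parts]
  ring

lemma monotone_cdf_add (μ : Measure ℝ) (s : ℝ) : Monotone fun x => cdf μ (x + s) :=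
  (monotone_cdf μ).comp add_left_mono

lemma continuousWithinAt_Ici_cdf_add (μ : Measure ℝ) (s x : ℝ) :
    ContinuousWithinAt (fun x => cdf μ (x + s)) (Ici x) x :=
  ContinuousWithinAt.comp (g := cdf μ) (f := (· + s)) ((cdf μ).right_continuous (x + s))
    (by fun_prop) fun _ hy => by simpa using hy

namespace IsWeakTransport

variable {κ : Kernel ℝ ℝ} {L : ℝ → ℝ → ℝ} {χ ψ : ℝ → ℝ}

lemma continuous_movingAverage (h : IsWeakTransport κ L) (hψ : Continuous ψ)
    (hψs : HasCompactSupport ψ) (c : ℝ) :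
    Continuous (movingAverage ψ c fun t => cdf (κ t)) :=
  _root_.continuous_movingAverage hψ hψs c
    (fun t => (monotone_cdf (κ t)).locallyIntegrable) h.continuousL1loc

variable [IsMarkovKernel κ]

lemma setIntegral_deriv_mul_movingAverage_add (h : IsWeakTransport κ L) (hχ : ContDiff ℝ 1 χ)
    (hχs : HasCompactSupport χ) (hχ0 : χ 0 = 0) (hψ : ContDiff ℝ 1 ψ)
    (hψs : HasCompactSupport ψ) (c : ℝ) :
    ∫ t in Ici (0 : ℝ), (deriv χ t * movingAverage ψ c (fun t => cdf (κ t)) t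
        + c * χ t * ∫ x, ψ (x - c * t) ∂κ t)
      = ∫ t in Ici (0 : ℝ), χ t * ∫ x, ψ (x - c * t) * L t x ∂κ t := by
  have weak := h.weak_eq _ _ (isTestFun_mul_comp_sub hχ hχs hψ hψs c)
    fun x => by rw [hχ0, zero_mul]
  simpa only [integral_testFun_mul_cdf _ hψ hψs, mul_assoc (χ _), integral_const_mul,
    movingAverage] using weak

lemma integrable_mul_integral_velocity (h : IsWeakTransport κ L) (hχ : Integrable χ)
    (hψ : Continuous ψ) (hψs : HasCompactSupport ψ) (c : ℝ) :
    Integrable fun t => χ t * ∫ x, ψ (x - c * t) * L t x ∂κ t := by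
  obtain ⟨C, hC⟩ := h.bounded_velocity
  obtain ⟨M, hM⟩ := hψ.bounded_above_of_compact_support hψs
  have measurable_weight : Measurable fun p : ℝ × ℝ => ψ (p.2 - c * p.1) :=
    hψ.measurable.comp (by fun_prop)
  refine integrable_mul_integral_kernel κ hχ (measurable_weight.mul h.measurable_velocity)
    (C := M * C) fun t x => ?_
  rw [abs_mul]
  exact mul_le_mul (hM _) (hC t x) (abs_nonneg _) ((norm_nonneg _).trans (hM 0))

lemma integral_mul_velocity_sub (h : IsWeakTransport κ L) (hψ : Continuous ψ)
    (hψs : HasCompactSupport ψ) (c t s : ℝ) :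
    ∫ x, ψ (x - s) * (L t x - c) ∂κ t
      = (∫ x, ψ (x - s) * L t x ∂κ t) - c * ∫ x, ψ (x - s) ∂κ t := by
  obtain ⟨C, hC⟩ := h.bounded_velocity
  have int_weight : Integrable (fun x => ψ (x - s)) (κ t) :=
    (show Continuous fun x => ψ (x - s) by fun_prop).integrable_of_hasCompactSupport
      (hψs.comp_homeomorph (Homeomorph.subRight s))
  have int_flux : Integrable (fun x => ψ (x - s) * L t x) (κ t) :=
    int_weight.mul_bdd (c := C) h.measurable_velocity.of_uncurry_left.aestronglyMeasurable
      (Eventually.of_forall (hC t))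
  simp only [mul_sub]
  rw [integral_sub int_flux (int_weight.mul_const c), integral_mul_const, mul_comm c]

lemma integral_deriv_mul_movingAverage (h : IsWeakTransport κ L) (hχ : ContDiff ℝ 1 χ)
    (hχs : HasCompactSupport χ) (hχ0 : tsupport χ ⊆ Ioi 0) (hψ : ContDiff ℝ 1 ψ)
    (hψs : HasCompactSupport ψ) (c : ℝ) :
    ∫ t, deriv χ t * movingAverage ψ c (fun t => cdf (κ t)) t
      = ∫ t in Ici (0 : ℝ), χ t * ∫ x, ψ (x - c * t) * (L t x - c) ∂κ t := by
  obtain ⟨M, hM⟩ := hψ.continuous.bounded_above_of_compact_support hψs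
  have hχi : Integrable χ := hχ.continuous.integrable_of_hasCompactSupport hχs
  have int_average : Integrable fun t => deriv χ t * movingAverage ψ c (fun t => cdf (κ t)) t :=
    ((hχ.continuous_deriv le_rfl).mul
      (h.continuous_movingAverage hψ.continuous hψs c)).integrable_of_hasCompactSupport
        hχs.deriv.mul_right
  have int_weight : Integrable fun t => c * χ t * ∫ x, ψ (x - c * t) ∂κ t :=
    integrable_mul_integral_kernel κ (hχi.const_mul c)
      (hψ.continuous.measurable.comp (by fun_prop)) fun t x => hM _
  have int_flux := h.integrable_mul_integral_velocity hχi hψ.continuous hψs c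
  have χ_zero : χ 0 = 0 := image_eq_zero_of_notMem_tsupport fun h0 => (lt_irrefl (0 : ℝ)) (hχ0 h0)
  have deriv_zero {t : ℝ} (ht : t ∉ Ici 0) : deriv χ t = 0 :=
    Function.notMem_support.1 fun hmem =>
      ht (Ioi_subset_Ici_self (hχ0 (support_deriv_subset hmem)))
  have weak := h.setIntegral_deriv_mul_movingAverage_add hχ hχs χ_zero hψ hψs c
  rw [integral_add int_average.integrableOn int_weight.integrableOn] at weak
  rw [← setIntegral_eq_integral_of_forall_compl_eq_zero fun t ht => by
      rw [deriv_zero ht, zero_mul],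
    eq_sub_of_add_eq weak, ← integral_sub int_flux.integrableOn int_weight.integrableOn]
  refine integral_congr_ae (Eventually.of_forall fun t => ?_)
  simp only [h.integral_mul_velocity_sub hψ.continuous hψs]
  ring

lemma monotoneOn_movingAverage (h : IsWeakTransport κ L) {c : ℝ} (hc : ∀ t x, L t x ≤ c)
    (hψ : ContDiff ℝ 1 ψ) (hψs : HasCompactSupport ψ) (hψ0 : 0 ≤ ψ) :
    MonotoneOn (movingAverage ψ c fun t => cdf (κ t)) (Ici 0) := by
  refine monotoneOn_Ici_of_integral_deriv_mul_nonpos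
    (h.continuous_movingAverage hψ.continuous hψs c) fun χ hχ hχs hχ0 hχ_nonneg => ?_
  rw [h.integral_deriv_mul_movingAverage hχ hχs hχ0 hψ hψs]
  refine integral_nonpos fun t => mul_nonpos_of_nonneg_of_nonpos (hχ_nonneg t) ?_
  exact integral_nonpos fun x => mul_nonpos_of_nonneg_of_nonpos (hψ0 _) (sub_nonpos.2 (hc t x))

lemma antitoneOn_movingAverage (h : IsWeakTransport κ L) {c : ℝ} (hc : ∀ t x, c ≤ L t x)
    (hψ : ContDiff ℝ 1 ψ) (hψs : HasCompactSupport ψ) (hψ0 : 0 ≤ ψ) :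
    AntitoneOn (movingAverage ψ c fun t => cdf (κ t)) (Ici 0) := by
  refine antitoneOn_Ici_of_integral_deriv_mul_nonneg
    (h.continuous_movingAverage hψ.continuous hψs c) fun χ hχ hχs hχ0 hχ_nonneg => ?_
  rw [h.integral_deriv_mul_movingAverage hχ hχs hχ0 hψ hψs]
  refine integral_nonneg fun t => mul_nonneg (hχ_nonneg t) ?_
  exact integral_nonneg fun x => mul_nonneg (hψ0 _) (sub_nonneg.2 (hc t x))

lemma monotoneOn_cdf_moving (h : IsWeakTransport κ L) {c : ℝ} (hc : ∀ t x, L t x ≤ c) (x : ℝ) :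
    MonotoneOn (fun t => cdf (κ t) (x + c * t)) (Ici 0) := fun t₁ ht₁ t₂ ht₂ h₁₂ =>
  le_of_forall_integral_mul_le (monotone_cdf_add (κ t₁) _) (monotone_cdf_add (κ t₂) _)
    (fun ψ hψ hψs hψ0 => by
      simpa only [movingAverage_eq] using h.monotoneOn_movingAverage hc hψ hψs hψ0 ht₁ ht₂ h₁₂)
    (continuousWithinAt_Ici_cdf_add (κ t₂) _ x)

lemma antitoneOn_cdf_moving (h : IsWeakTransport κ L) {c : ℝ} (hc : ∀ t x, c ≤ L t x) (x : ℝ) :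
    AntitoneOn (fun t => cdf (κ t) (x + c * t)) (Ici 0) := fun t₁ ht₁ t₂ ht₂ h₁₂ =>
  le_of_forall_integral_mul_le (monotone_cdf_add (κ t₂) _) (monotone_cdf_add (κ t₁) _)
    (fun ψ hψ hψs hψ0 => by
      simpa only [movingAverage_eq] using h.antitoneOn_movingAverage hc hψ hψs hψ0 ht₁ ht₂ h₁₂)
    (continuousWithinAt_Ici_cdf_add (κ t₁) _ x)

end IsWeakTransport

/-! ### Quantiles -/

lemma isCDF_cdf (μ : Measure ℝ) : IsCDF (cdf μ) :=
  ⟨monotone_cdf μ, (cdf μ).right_continuous, tendsto_cdf_atBot μ, tendsto_cdf_atTop μ⟩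

namespace IsCDF

variable {F G : ℝ → ℝ}

lemma mem_Icc (hF : IsCDF F) (x : ℝ) : F x ∈ Icc (0 : ℝ) 1 :=
  ⟨hF.1.le_of_tendsto hF.2.2.1 x, hF.1.ge_of_tendsto hF.2.2.2 x⟩

lemma leftLim_mem_Icc (hF : IsCDF F) (x : ℝ) : Function.leftLim F x ∈ Icc (0 : ℝ) 1 :=
  isClosed_Icc.mem_of_tendsto (hF.1.tendsto_leftLim x) (Eventually.of_forall hF.mem_Icc)

lemma cdfInv_le_cdfInv_add (hF : IsCDF F) (hG : IsCDF G) {v : ℝ} (hv : v ∈ Ioo (0 : ℝ) 1) {s : ℝ}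
    (h : ∀ x, F x ≤ G (x + s)) : cdfInv G v ≤ cdfInv F v + s := by
  have nonempty : {x | v ≤ F x}.Nonempty := (hF.2.2.2.eventually_const_le hv.2).exists
  have bddBelow : BddBelow {x | v ≤ G x} := by
    obtain ⟨x, hx⟩ := (hG.2.2.1.eventually_lt_const hv.1).exists
    exact ⟨x, fun y hy => (hG.1.reflect_lt (hx.trans_le hy)).le⟩
  rw [← sub_le_iff_le_add]
  refine le_csInf nonempty fun x hx => sub_le_iff_le_add.2 ?_
  exact csInf_le bddBelow (hx.trans (h x))

end IsCDF

namespace IsWeakTransport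

variable {κ : Kernel ℝ ℝ} [IsMarkovKernel κ] {L : ℝ → ℝ → ℝ} {c v t₁ t₂ : ℝ}

lemma cdfInv_le_cdfInv_add (h : IsWeakTransport κ L) (hc : ∀ t x, L t x ≤ c)
    (hv : v ∈ Ioo (0 : ℝ) 1) (h₁ : 0 ≤ t₁) (h₁₂ : t₁ ≤ t₂) :
    cdfInv (cdf (κ t₂)) v ≤ cdfInv (cdf (κ t₁)) v + c * (t₂ - t₁) := by
  refine (isCDF_cdf _).cdfInv_le_cdfInv_add (isCDF_cdf _) hv fun x => ?_
  calc cdf (κ t₁) x = cdf (κ t₁) (x - c * t₁ + c * t₁) := by rw [sub_add_cancel]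
    _ ≤ cdf (κ t₂) (x - c * t₁ + c * t₂) :=
      h.monotoneOn_cdf_moving hc _ h₁ (h₁.trans h₁₂) h₁₂
    _ = cdf (κ t₂) (x + c * (t₂ - t₁)) := by ring_nf

lemma cdfInv_add_le_cdfInv (h : IsWeakTransport κ L) (hc : ∀ t x, c ≤ L t x)
    (hv : v ∈ Ioo (0 : ℝ) 1) (h₁ : 0 ≤ t₁) (h₁₂ : t₁ ≤ t₂) :
    cdfInv (cdf (κ t₁)) v + c * (t₂ - t₁) ≤ cdfInv (cdf (κ t₂)) v := by
  have shift_back : cdfInv (cdf (κ t₁)) v ≤ cdfInv (cdf (κ t₂)) v + c * (t₁ - t₂) := by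
    refine (isCDF_cdf _).cdfInv_le_cdfInv_add (isCDF_cdf _) hv fun x => ?_
    calc cdf (κ t₂) x = cdf (κ t₂) (x - c * t₂ + c * t₂) := by rw [sub_add_cancel]
      _ ≤ cdf (κ t₁) (x - c * t₂ + c * t₁) :=
        h.antitoneOn_cdf_moving hc _ h₁ (h₁.trans h₁₂) h₁₂
      _ = cdf (κ t₁) (x + c * (t₁ - t₂)) := by ring_nf
  linarith

end IsWeakTransport

/-! ### The velocity of a diagonal system -/

/-- The state at which `lamBrace` evaluates the velocity: inside a jump of the `γ`-th coordinate
at `x`, that coordinate sits at the fraction `θ` of the jump. -/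
def jumpState {d : ℕ} (u : Fin d → ℝ → ℝ → ℝ) (γ : Fin d) (t x θ : ℝ) : Fin d → ℝ :=
  Function.update (fun γ' => u γ' t x) γ
    ((1 - θ) * Function.leftLim (u γ t) x + θ * u γ t x)

lemma measurable_leftLim {α : Type*} [MeasurableSpace α] {f : α → ℝ → ℝ}
    (hf : Measurable (Function.uncurry f)) (hmono : ∀ a, Monotone (f a)) :
    Measurable fun p : α × ℝ => Function.leftLim (f p.1) p.2 := by
  have hgap (n : ℕ) : (0 : ℝ) < 1 / (n + 1) := Nat.one_div_pos_of_nat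
  refine measurable_of_tendsto_metrizable
    (f := fun (n : ℕ) (p : α × ℝ) => f p.1 (p.2 - 1 / (n + 1)))
    (fun n => hf.comp (measurable_fst.prodMk (measurable_snd.sub_const _))) ?_
  refine tendsto_pi_nhds.2 fun p => ((hmono p.1).tendsto_leftLim p.2).comp ?_
  refine tendsto_nhdsWithin_iff.2 ⟨?_, Eventually.of_forall fun n => sub_lt_self _ (hgap n)⟩
  simpa using tendsto_one_div_add_atTop_nhds_zero_nat.const_sub p.2

lemma measurable_indicator_of_continuousOn {α β : Type*} [TopologicalSpace α] [MeasurableSpace α]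
    [OpensMeasurableSpace α] [TopologicalSpace β] [MeasurableSpace β] [BorelSpace β] [Zero β]
    {f : α → β} {s : Set α} (hf : ContinuousOn f s) (hs : MeasurableSet s) :
    Measurable (s.indicator f) := by
  classical
  rw [← piecewise_eq_indicator]
  exact hf.measurable_piecewise continuousOn_const hs

section Velocity

variable {d : ℕ} {lam : Fin d → (Fin d → ℝ) → ℝ} {u : Fin d → ℝ → ℝ → ℝ}

lemma jumpState_mem_Icc (γ : Fin d) {t : ℝ} (hu : ∀ γ', IsCDF (u γ' t)) (x : ℝ) {θ : ℝ}
    (hθ : θ ∈ Icc (0 : ℝ) 1) : jumpState u γ t x θ ∈ Icc (0 : Fin d → ℝ) 1 := by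
  have between : (1 - θ) * Function.leftLim (u γ t) x + θ * u γ t x ∈ Icc (0 : ℝ) 1 :=
    convex_Icc 0 1 ((hu γ).leftLim_mem_Icc x) ((hu γ).mem_Icc x) (sub_nonneg.2 hθ.2) hθ.1
      (sub_add_cancel 1 θ)
  have coord (γ' : Fin d) : jumpState u γ t x θ γ' ∈ Icc (0 : ℝ) 1 := by
    rw [jumpState, Function.update_apply]
    split_ifs
    exacts [between, (hu γ').mem_Icc x]
  exact ⟨fun γ' => (coord γ').1, fun γ' => (coord γ').2⟩

lemma measurable_jumpState (γ : Fin d) (hu : ∀ t, Monotone (u γ t))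
    (hm : ∀ γ', Measurable (Function.uncurry (u γ'))) :
    Measurable fun p : (ℝ × ℝ) × ℝ => jumpState u γ p.1.1 p.1.2 p.2 := by
  have value (γ' : Fin d) : Measurable fun p : (ℝ × ℝ) × ℝ => u γ' p.1.1 p.1.2 :=
    (hm γ').comp measurable_fst
  have leftValue : Measurable fun p : (ℝ × ℝ) × ℝ => Function.leftLim (u γ p.1.1) p.1.2 :=
    (measurable_leftLim (hm γ) hu).comp measurable_fst
  refine measurable_pi_iff.2 fun γ' => ?_
  simp only [jumpState, Function.update_apply]
  split_ifs
  · have := value γ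
    fun_prop
  · exact value γ'

/-- The integrand on the right is jointly measurable in `(t, x, θ)` whatever the values of `lam γ`
off the cube. -/
lemma lamBrace_eq_integral_indicator (γ : Fin d) {t : ℝ} (hu : ∀ γ', IsCDF (u γ' t)) (x : ℝ) :
    lamBrace lam u γ t x =
      ∫ θ in Ioc (0 : ℝ) 1, (Icc 0 1).indicator (lam γ) (jumpState u γ t x θ) := by
  rw [lamBrace, intervalIntegral.integral_of_le zero_le_one]
  refine setIntegral_congr_fun measurableSet_Ioc fun θ hθ => ?_
  exact (indicator_of_mem (jumpState_mem_Icc γ hu x (Ioc_subset_Icc_self hθ)) _).symm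

lemma measurable_lamBrace {γ : Fin d} (hlam : Measurable ((Icc 0 1).indicator (lam γ)))
    (hu : ∀ γ' t, IsCDF (u γ' t)) (hm : ∀ γ', Measurable (Function.uncurry (u γ'))) :
    Measurable (Function.uncurry (lamBrace lam u γ)) := by
  have eq_indicator : Function.uncurry (lamBrace lam u γ) = fun p =>
      ∫ θ in Ioc (0 : ℝ) 1, (Icc 0 1).indicator (lam γ) (jumpState u γ p.1 p.2 θ) :=
    funext fun p => lamBrace_eq_integral_indicator γ (hu · p.1) p.2
  have joint : StronglyMeasurable fun p : (ℝ × ℝ) × ℝ =>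
      (Icc 0 1).indicator (lam γ) (jumpState u γ p.1.1 p.1.2 p.2) :=
    (hlam.comp (measurable_jumpState γ (fun t => (hu γ t).1) hm)).stronglyMeasurable
  rw [eq_indicator]
  exact joint.integral_prod_right'.measurable

lemma lamBrace_mem_Icc {γ : Fin d} (hlam : Measurable ((Icc 0 1).indicator (lam γ)))
    (hbdd : Bornology.IsBounded (lam γ '' Icc 0 1)) {t : ℝ} (hu : ∀ γ', IsCDF (u γ' t)) (x : ℝ) :
    lamBrace lam u γ t x ∈ Icc (sInf (lam γ '' Icc 0 1)) (sSup (lam γ '' Icc 0 1)) := by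
  have : IsProbabilityMeasure (volume.restrict (Ioc (0 : ℝ) 1)) := ⟨by simp⟩
  obtain ⟨bddBelow, bddAbove⟩ := isBounded_iff_bddBelow_bddAbove.1 hbdd
  have value_mem : ∀ᵐ θ ∂volume.restrict (Ioc (0 : ℝ) 1),
      (Icc 0 1).indicator (lam γ) (jumpState u γ t x θ) ∈
        Icc (sInf (lam γ '' Icc 0 1)) (sSup (lam γ '' Icc 0 1)) := by
    filter_upwards [ae_restrict_mem measurableSet_Ioc] with θ hθ
    have state_mem := jumpState_mem_Icc γ hu x (Ioc_subset_Icc_self hθ)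
    rw [indicator_of_mem state_mem]
    exact ⟨csInf_le bddBelow (mem_image_of_mem _ state_mem),
      le_csSup bddAbove (mem_image_of_mem _ state_mem)⟩
  have continuous_state : Continuous (jumpState u γ t x) := continuous_const.update γ (by fun_prop)
  rw [lamBrace_eq_integral_indicator γ hu]
  exact (convex_Icc _ _).integral_mem isClosed_Icc value_mem
    (Integrable.of_mem_Icc _ _ (hlam.comp continuous_state.measurable).aemeasurable value_mem)

end Velocity

/-! ### The transport equation of one coordinate -/

lemma measurable_of_measurable_cdf {α : Type*} [MeasurableSpace α] {μ : α → Measure ℝ}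
    [∀ a, IsProbabilityMeasure (μ a)] (hμ : ∀ x, Measurable fun a => cdf (μ a) x) :
    Measurable μ := by
  have := StieltjesFunction.measurable_measure hμ (fun a => tendsto_cdf_atBot (μ a))
    fun a => tendsto_cdf_atTop (μ a)
  simpa only [measure_cdf] using this

lemma isTestFun_zero : IsTestFun 0 0 :=
  ⟨continuous_const, HasCompactSupport.zero, continuous_const, fun t _ => hasDerivAt_const t 0⟩

section ProbabilisticSolution

variable {d : ℕ} {lam : Fin d → (Fin d → ℝ) → ℝ} {u : Fin d → ℝ → ℝ → ℝ} {u0 : Fin d → ℝ → ℝ}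

/-- The extension of `u` to negative times by its value at time `0`. It makes the time variable
range over `ℝ`, since `u` is only constrained at nonnegative times. -/
def constExtend (u : Fin d → ℝ → ℝ → ℝ) (γ : Fin d) (t x : ℝ) : ℝ := u γ (max t 0) x

variable (u) in
lemma constExtend_of_nonneg (γ : Fin d) {t : ℝ} (ht : 0 ≤ t) : constExtend u γ t = u γ t := by
  ext x
  rw [constExtend, max_eq_left ht]

lemma lamBrace_constExtend (γ : Fin d) {t : ℝ} (ht : 0 ≤ t) :
    lamBrace lam (constExtend u) γ t = lamBrace lam u γ t := by
  ext x
  simp only [lamBrace, constExtend_of_nonneg u _ ht]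

lemma continuousL1loc_constExtend {γ : Fin d}
    (hL1 : ∀ a b t₀ : ℝ, 0 ≤ t₀ → Tendsto (fun t => ∫ x in Icc a b, |u γ t x - u γ t₀ x|)
      (𝓝[Ici 0] t₀) (𝓝 0)) : ContinuousL1loc (constExtend u γ) := fun a b t₀ => by
  refine (hL1 a b (max t₀ 0) (le_max_right _ _)).comp (f := fun t => max t 0) ?_
  exact tendsto_nhdsWithin_iff.2 ⟨(continuous_id.max continuous_const).tendsto t₀,
    Eventually.of_forall fun t => le_max_right t 0⟩

namespace IsProbSol

lemma isCDF_constExtend (h : IsProbSol lam u u0) (γ : Fin d) (t : ℝ) :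
    IsCDF (constExtend u γ t) :=
  h.2.1 γ _ (le_max_right _ _)

lemma measurable_constExtend (h : IsProbSol lam u u0) (γ : Fin d) :
    Measurable (Function.uncurry (constExtend u γ)) := by
  have clamp : Measurable fun p : ℝ × ℝ =>
      (⟨max p.1 0, mem_Ici.2 (le_max_right _ _)⟩ : Ici (0 : ℝ)) :=
    Measurable.subtype_mk (by fun_prop)
  exact (h.1 γ).comp (clamp.prodMk measurable_snd)

lemma exists_kernel_weak_eq (h : IsProbSol lam u u0) (γ : Fin d) :
    ∃ κ : Kernel ℝ ℝ, IsMarkovKernel κ ∧ (∀ t, ⇑(cdf (κ t)) = constExtend u γ t) ∧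
      ∀ φ φt : ℝ → ℝ → ℝ, IsTestFun φ φt → (∀ x, φ 0 x = 0) →
        ∫ t in Ici (0 : ℝ), ∫ x, φt t x * u γ t x
          = ∫ t in Ici (0 : ℝ), ∫ x, φ t x * lamBrace lam u γ t x ∂κ t := by
  have hm := h.measurable_constExtend γ
  obtain ⟨-, -, -, μ, hμ_prob, hμ_cdf, weak⟩ := h
  have cdf_eq (t x : ℝ) : cdf (μ γ (max t 0)) x = constExtend u γ t x := by
    rw [cdf_eq_real, constExtend, ← hμ_cdf γ _ (le_max_right _ _), Measure.real]
  refine ⟨⟨fun t => μ γ (max t 0), measurable_of_measurable_cdf fun x => ?_⟩,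
    ⟨fun t => hμ_prob γ _⟩, fun t => funext (cdf_eq t), fun φ φt hφ hφ0 => ?_⟩
  · simpa only [cdf_eq] using hm.of_uncurry_right (y := x)
  · have weak_single := weak (Pi.single γ φ) (Pi.single γ φt) fun γ' => by
      rcases eq_or_ne γ' γ with rfl | hne
      · simpa using hφ
      · simpa [hne] using isTestFun_zero
    rw [Finset.sum_eq_single γ, Finset.sum_eq_single γ] at weak_single
    · simp only [Pi.single_eq_same, hφ0, zero_mul, integral_zero, add_zero] at weak_single
      refine weak_single.trans (setIntegral_congr_fun measurableSet_Ici fun t ht => ?_)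
      change _ = ∫ x, _ ∂(μ γ (max t 0))
      rw [max_eq_left ht]
    all_goals simp +contextual

lemma exists_isWeakTransport (h : IsProbSol lam u u0) {γ : Fin d}
    (hlam : Measurable ((Icc 0 1).indicator (lam γ)))
    (hbdd : Bornology.IsBounded (lam γ '' Icc 0 1))
    (hL1 : ∀ a b t₀ : ℝ, 0 ≤ t₀ → Tendsto (fun t => ∫ x in Icc a b, |u γ t x - u γ t₀ x|)
      (𝓝[Ici 0] t₀) (𝓝 0)) :
    ∃ κ : Kernel ℝ ℝ, IsMarkovKernel κ ∧ (∀ t, ⇑(cdf (κ t)) = constExtend u γ t) ∧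
      IsWeakTransport κ (lamBrace lam (constExtend u) γ) := by
  obtain ⟨κ, hκ, cdf_eq, weak⟩ := h.exists_kernel_weak_eq γ
  refine ⟨κ, hκ, cdf_eq, ?_, ?_, ?_, fun φ φt hφ hφ0 => ?_⟩
  · simpa only [cdf_eq] using continuousL1loc_constExtend hL1
  · exact measurable_lamBrace hlam h.isCDF_constExtend h.measurable_constExtend
  · refine ⟨max |sInf (lam γ '' Icc 0 1)| |sSup (lam γ '' Icc 0 1)|, fun t x => ?_⟩
    have velocity_mem := lamBrace_mem_Icc hlam hbdd (h.isCDF_constExtend · t) x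
    exact abs_le_max_abs_abs velocity_mem.1 velocity_mem.2
  · calc ∫ t in Ici (0 : ℝ), ∫ x, φt t x * cdf (κ t) x
        = ∫ t in Ici (0 : ℝ), ∫ x, φt t x * u γ t x :=
          setIntegral_congr_fun measurableSet_Ici fun t ht => by
            simp only [cdf_eq, constExtend_of_nonneg u γ ht]
      _ = ∫ t in Ici (0 : ℝ), ∫ x, φ t x * lamBrace lam u γ t x ∂κ t := weak φ φt hφ hφ0
      _ = ∫ t in Ici (0 : ℝ), ∫ x, φ t x * lamBrace lam (constExtend u) γ t x ∂κ t :=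
          setIntegral_congr_fun measurableSet_Ici fun t ht => by
            simp only [lamBrace_constExtend γ ht]

end IsProbSol

end ProbabilisticSolution

theorem lipschitz_quantile_trajectories_general {d : ℕ} {lam : Fin d → (Fin d → ℝ) → ℝ}
    {u : Fin d → ℝ → ℝ → ℝ} {u0 : Fin d → ℝ → ℝ} (hsol : IsProbSol lam u u0) {γ : Fin d}
    (hlam : Measurable ((Icc 0 1).indicator (lam γ)))
    (hbdd : Bornology.IsBounded (lam γ '' Icc 0 1))
    (hL1 : ∀ a b t₀ : ℝ, 0 ≤ t₀ → Tendsto (fun t => ∫ x in Icc a b, |u γ t x - u γ t₀ x|)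
      (𝓝[Ici 0] t₀) (𝓝 0))
    {v : ℝ} (hv : v ∈ Ioo (0 : ℝ) 1) {t₁ t₂ : ℝ} (h₁ : 0 ≤ t₁) (h₁₂ : t₁ ≤ t₂) :
    cdfInv (u γ t₁) v + sInf (lam γ '' Icc 0 1) * (t₂ - t₁) ≤ cdfInv (u γ t₂) v ∧
      cdfInv (u γ t₂) v ≤ cdfInv (u γ t₁) v + sSup (lam γ '' Icc 0 1) * (t₂ - t₁) := by
  obtain ⟨κ, _, cdf_eq, transport⟩ := hsol.exists_isWeakTransport hlam hbdd hL1
  have velocity_mem (t : ℝ) := lamBrace_mem_Icc hlam hbdd (hsol.isCDF_constExtend · t)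
  rw [← constExtend_of_nonneg u γ h₁, ← constExtend_of_nonneg u γ (h₁.trans h₁₂),
    ← cdf_eq, ← cdf_eq]
  exact ⟨transport.cdfInv_add_le_cdfInv (fun t x => (velocity_mem t x).1) hv h₁ h₁₂,
    transport.cdfInv_le_cdfInv_add (fun t x => (velocity_mem t x).2) hv h₁ h₁₂⟩

/-- **Lipschitz continuity of quantile trajectories**: for a probabilistic solution
continuous in `L¹_loc`, for a.e. `v ∈ (0,1)` the quantile trajectory
`t ↦ X_v^γ(t) = (u^γ(t,·))⁻¹(v)` moves with speed between
`λ̲^γ = inf λ^γ` and `λ̄^γ = sup λ^γ` over `[0,1]^d`. -/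
theorem lipschitz_quantile_trajectories {d : ℕ} (hd : 1 ≤ d)
    (lam : Fin d → (Fin d → ℝ) → ℝ)
    (hlam : ∀ γ : Fin d, ContinuousOn (lam γ) (Icc (0 : Fin d → ℝ) 1))
    (u : Fin d → ℝ → ℝ → ℝ) (u0 : Fin d → ℝ → ℝ)
    (hsol : IsProbSol lam u u0) (hL1 : ContL1loc u) (γ : Fin d) :
    ∀ᵐ v ∂(volume.restrict (Ioo (0:ℝ) 1)),
      ∀ t₁ t₂ : ℝ, 0 ≤ t₁ → t₁ ≤ t₂ →
        cdfInv (u γ t₁) v + sInf (lam γ '' Icc (0 : Fin d → ℝ) 1) * (t₂ - t₁)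
            ≤ cdfInv (u γ t₂) v ∧
        cdfInv (u γ t₂) v
            ≤ cdfInv (u γ t₁) v + sSup (lam γ '' Icc (0 : Fin d → ℝ) 1) * (t₂ - t₁) :=
  (ae_restrict_mem measurableSet_Ioo).mono fun _ hv _ _ =>
    lipschitz_quantile_trajectories_general hsol
      (measurable_indicator_of_continuousOn (hlam γ) measurableSet_Icc)
      (isCompact_Icc.image_of_continuousOn (hlam γ)).isBounded (hL1 γ) hv
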